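/- Let $T>0$, $c<0$, $b>0$, and $-1<\mu<1$ with weight $w(x)=(1-x^2)^\mu$. Suppose $(\eta_1,u_1)$ and $(\eta_2,u_2)$ are two solutions in $C([0,T];H^2_w)\times C([0,T];H^1_w)$ of the integral system $\eta(t)=H(t)+\int_0^t A_D(u+\eta u)\,d\tau$, $u(t)=U(t)+\int_0^t A_D(c\eta_{xx}+\eta+u^2/2)\,d\tau$ with the same data $H,U$. Then $(\eta_1,u_1)=(\eta_2,u_2)$ on $[0,T]$. -/

import Mathlib

open MeasureTheory Set

/-- The Jacobi weight `w(x) = (1-x^2)^μ`. -/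
noncomputable def jw (μ : ℝ) (x : ℝ) : ℝ := (1 - x^2) ^ μ

/-- Membership in the weighted Sobolev space `H^1_w(-1,1)`. -/
def MemH1w (μ : ℝ) (f : ℝ → ℝ) : Prop :=
  DifferentiableOn ℝ f (Ioo (-1) 1) ∧
  IntegrableOn (fun x => ((f x)^2 + (deriv f x)^2) * jw μ x) (Ioo (-1) 1)

/-- The `H^1_w` norm. -/
noncomputable def H1wNorm (μ : ℝ) (f : ℝ → ℝ) : ℝ :=
  Real.sqrt (∫ x in Ioo (-1:ℝ) 1, ((f x)^2 + (deriv f x)^2) * jw μ x)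

/-- Membership in the weighted space `L^2_w(-1,1)`. -/
def MemL2w (μ : ℝ) (f : ℝ → ℝ) : Prop :=
  IntegrableOn (fun x => (f x)^2 * jw μ x) (Ioo (-1) 1)

/-- The `L^2_w` norm. -/
noncomputable def L2wNorm (μ : ℝ) (f : ℝ → ℝ) : ℝ :=
  Real.sqrt (∫ x in Ioo (-1:ℝ) 1, (f x)^2 * jw μ x)

/-- Membership in the weighted Sobolev space `H^2_w(-1,1)`. -/
def MemH2w (μ : ℝ) (f : ℝ → ℝ) : Prop :=
  DifferentiableOn ℝ f (Ioo (-1) 1) ∧ DifferentiableOn ℝ (deriv f) (Ioo (-1) 1) ∧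
  IntegrableOn
    (fun x => ((f x)^2 + (deriv f x)^2 + (deriv (deriv f) x)^2) * jw μ x) (Ioo (-1) 1)

/-- The `H^2_w` norm. -/
noncomputable def H2wNorm (μ : ℝ) (f : ℝ → ℝ) : ℝ :=
  Real.sqrt (∫ x in Ioo (-1:ℝ) 1,
    ((f x)^2 + (deriv f x)^2 + (deriv (deriv f) x)^2) * jw μ x)

/-- `H^1_{w,0}`: functions of `H^1_w` vanishing at `±1`. -/
def MemH1w0 (μ : ℝ) (f : ℝ → ℝ) : Prop :=
  MemH1w μ f ∧ f (-1) = 0 ∧ f 1 = 0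

/-- The bilinear form `A_b(φ,ψ) = (φ,ψ)_w + b ∫ φ' (ψ w)'`. -/
noncomputable def bilinA (μ b : ℝ) (φ ψ : ℝ → ℝ) : ℝ :=
  (∫ x in Ioo (-1:ℝ) 1, φ x * ψ x * jw μ x) +
  b * ∫ x in Ioo (-1:ℝ) 1, deriv φ x * deriv (fun y => ψ y * jw μ y) x

/-- `w₁(x) = sinh((1+x)/√b)`. -/
noncomputable def wone (b x : ℝ) : ℝ := Real.sinh ((1 + x) / Real.sqrt b)

/-- `w₂(x) = sinh((1-x)/√b)`. -/
noncomputable def wtwo (b x : ℝ) : ℝ := Real.sinh ((1 - x) / Real.sqrt b)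

/-- The (constant) Wronskian `W = w₁ w₂' - w₁' w₂`, evaluated at `0`. -/
noncomputable def Wron (b : ℝ) : ℝ :=
  wone b 0 * deriv (wtwo b) 0 - deriv (wone b) 0 * wtwo b 0

/-- The `ξ`-derivative `G_ξ(x,ξ)` of the Green's function
`G(x,ξ) = -(1/(bW)) w₁(min(x,ξ)) w₂(max(x,ξ))`, taken piecewise away from `ξ = x`. -/
noncomputable def Gxi (b x ξ : ℝ) : ℝ :=
  if ξ ≤ x then -(1 / (b * Wron b)) * deriv (wone b) ξ * wtwo b x
  else -(1 / (b * Wron b)) * wone b x * deriv (wtwo b) ξ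

/-- The solution operator `A_D f (x) = ∫ G_ξ(x,ξ) f(ξ) dξ` of
`v - b v'' = -f'`, `v(±1) = 0`. -/
noncomputable def AD (b : ℝ) (f : ℝ → ℝ) (x : ℝ) : ℝ :=
  ∫ ξ in Set.Ioo (-1:ℝ) 1, Gxi b x ξ * f ξ

/-- `(η,u)` solves the integral system
`η(t) = H(t) + ∫₀ᵗ A_D(u + ηu) dτ`, `u(t) = U(t) + ∫₀ᵗ A_D(c η_xx + η + u²/2) dτ`
on `[0,T]`, as a member of `C([0,T];H²_w) × C([0,T];H¹_w)`. -/
def IsSolBS (T b c μ : ℝ) (H U η u : ℝ → ℝ → ℝ) : Prop :=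
  Continuous (fun p : ℝ × ℝ => η p.1 p.2) ∧
  Continuous (fun p : ℝ × ℝ => u p.1 p.2) ∧
  (∀ t ∈ Icc (0:ℝ) T, MemH2w μ (η t) ∧ MemH1w μ (u t)) ∧
  (∀ t ∈ Icc (0:ℝ) T, ∀ x : ℝ,
    η t x = H t x + (∫ τ in (0:ℝ)..t, AD b (fun y => u τ y + η τ y * u τ y) x) ∧
    u t x = U t x + (∫ τ in (0:ℝ)..t,
      AD b (fun y => c * deriv (deriv (η τ)) y + η τ y + (u τ y)^2 / 2) x))

/-- The Green's operator `A_D`, up to the constant `A`, in terms of one-sided integrals. -/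
noncomputable def greenOp (A k : ℝ) (f : ℝ → ℝ) (x : ℝ) : ℝ :=
  A * (Real.sinh (k * (1 - x)) * (∫ ξ in (-1:ℝ)..x, Real.cosh (k * (1 + ξ)) * f ξ) -
    Real.sinh (k * (1 + x)) * ∫ ξ in x..1, Real.cosh (k * (1 - ξ)) * f ξ)

/-- The derivative of `greenOp A k f`. -/
noncomputable def greenOpDeriv (A k : ℝ) (f : ℝ → ℝ) (x : ℝ) : ℝ :=
  A * (-(k * Real.cosh (k * (1 - x))) * (∫ ξ in (-1:ℝ)..x, Real.cosh (k * (1 + ξ)) * f ξ) -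
    k * Real.cosh (k * (1 + x)) * (∫ ξ in x..1, Real.cosh (k * (1 - ξ)) * f ξ) +
    (Real.sinh (k * (1 - x)) * Real.cosh (k * (1 + x)) +
      Real.sinh (k * (1 + x)) * Real.cosh (k * (1 - x))) * f x)

/-- The value of `greenOp A k p'` after an integration by parts. -/
noncomputable def greenOpParts (A k : ℝ) (p : ℝ → ℝ) (x : ℝ) : ℝ :=
  A * (Real.sinh (k * (1 - x)) * (Real.cosh (k * (1 + x)) * p x - p (-1) -
      k * ∫ ξ in (-1:ℝ)..x, Real.sinh (k * (1 + ξ)) * p ξ) -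
    Real.sinh (k * (1 + x)) * (p 1 - Real.cosh (k * (1 - x)) * p x +
      k * ∫ ξ in x..1, Real.sinh (k * (1 - ξ)) * p ξ))

lemma deriv_wone (b ξ : ℝ) :
    deriv (wone b) ξ = (√b)⁻¹ * Real.cosh ((√b)⁻¹ * (1 + ξ)) := by
  have h : HasDerivAt (fun x : ℝ => (1 + x) / √b) (1 / √b) ξ :=
    ((hasDerivAt_id ξ).const_add 1).div_const _
  have := h.sinh.deriv
  unfold wone
  rw [this]
  simp only [div_eq_mul_inv, one_mul]
  ring_nf

lemma deriv_wtwo (b ξ : ℝ) :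
    deriv (wtwo b) ξ = -((√b)⁻¹ * Real.cosh ((√b)⁻¹ * (1 - ξ))) := by
  have h : HasDerivAt (fun x : ℝ => (1 - x) / √b) (-1 / √b) ξ :=
    ((hasDerivAt_id ξ).const_sub 1).div_const _
  have := h.sinh.deriv
  unfold wtwo
  rw [this]
  simp only [div_eq_mul_inv, neg_mul, one_mul]
  ring_nf

/-- The constant relating `AD` and `greenOp`. -/
noncomputable def greenConst (b : ℝ) : ℝ := -(1 / (b * Wron b)) * (√b)⁻¹

lemma Gxi_of_le {b x ξ : ℝ} (h : ξ ≤ x) :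
    Gxi b x ξ = greenConst b * Real.sinh ((√b)⁻¹ * (1 - x)) *
      Real.cosh ((√b)⁻¹ * (1 + ξ)) := by
  rw [Gxi, if_pos h, deriv_wone, wtwo, greenConst, div_eq_inv_mul (1 - x)]
  ring

lemma Gxi_of_lt {b x ξ : ℝ} (h : x < ξ) :
    Gxi b x ξ = -(greenConst b * Real.sinh ((√b)⁻¹ * (1 + x))) *
      Real.cosh ((√b)⁻¹ * (1 - ξ)) := by
  rw [Gxi, if_neg h.not_ge, deriv_wtwo, wone, greenConst, div_eq_inv_mul (1 + x)]
  ring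

lemma intervalIntegrable_Gxi_mul {b x : ℝ} (hx : x ∈ Icc (-1:ℝ) 1) {f : ℝ → ℝ}
    (hf : IntervalIntegrable f volume (-1) 1) :
    IntervalIntegrable (fun ξ => Gxi b x ξ * f ξ) volume (-1) x ∧
    IntervalIntegrable (fun ξ => Gxi b x ξ * f ξ) volume x 1 := by
  have hx' : x ∈ uIcc (-1:ℝ) 1 := by rwa [uIcc_of_le (by norm_num)]
  have h1 := hf.mono_set (uIcc_subset_uIcc_left hx')
  have h2 := hf.mono_set (uIcc_subset_uIcc_right hx')
  constructor
  · refine (h1.continuousOn_mul (g := fun ξ => greenConst b * Real.sinh ((√b)⁻¹ * (1 - x)) *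
      Real.cosh ((√b)⁻¹ * (1 + ξ))) (by fun_prop)).congr ?_
    intro ξ hξ
    rw [uIoc_of_le hx.1] at hξ
    simp only [Gxi_of_le hξ.2]
  · refine (h2.continuousOn_mul (g := fun ξ => -(greenConst b * Real.sinh ((√b)⁻¹ * (1 + x))) *
      Real.cosh ((√b)⁻¹ * (1 - ξ))) (by fun_prop)).congr ?_
    intro ξ hξ
    rw [uIoc_of_le hx.2] at hξ
    simp only [Gxi_of_lt hξ.1]

lemma AD_eq_integral (b : ℝ) (f : ℝ → ℝ) (x : ℝ) :
    AD b f x = ∫ ξ in (-1:ℝ)..1, Gxi b x ξ * f ξ := by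
  rw [AD, intervalIntegral.integral_of_le (by norm_num), integral_Ioc_eq_integral_Ioo]

lemma AD_eq_greenOp {b x : ℝ} (hx : x ∈ Icc (-1:ℝ) 1) {f : ℝ → ℝ}
    (hf : IntervalIntegrable f volume (-1) 1) :
    AD b f x = greenOp (greenConst b) (√b)⁻¹ f x := by
  obtain ⟨h1, h2⟩ := intervalIntegrable_Gxi_mul (b := b) hx hf
  have e1 : ∫ ξ in (-1:ℝ)..x, Gxi b x ξ * f ξ =
      ∫ ξ in (-1:ℝ)..x, greenConst b * Real.sinh ((√b)⁻¹ * (1 - x)) *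
        (Real.cosh ((√b)⁻¹ * (1 + ξ)) * f ξ) := by
    refine intervalIntegral.integral_congr_ae (Filter.Eventually.of_forall fun ξ hξ => ?_)
    rw [uIoc_of_le hx.1] at hξ
    rw [Gxi_of_le hξ.2, mul_assoc]
  have e2 : ∫ ξ in x..1, Gxi b x ξ * f ξ =
      ∫ ξ in x..1, -(greenConst b * Real.sinh ((√b)⁻¹ * (1 + x))) *
        (Real.cosh ((√b)⁻¹ * (1 - ξ)) * f ξ) := by
    refine intervalIntegral.integral_congr_ae (Filter.Eventually.of_forall fun ξ hξ => ?_)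
    rw [uIoc_of_le hx.2] at hξ
    rw [Gxi_of_lt hξ.1, mul_assoc]
  rw [AD_eq_integral, ← intervalIntegral.integral_add_adjacent_intervals h1 h2, e1, e2,
    intervalIntegral.integral_const_mul, intervalIntegral.integral_const_mul, greenOp]
  ring

lemma AD_sub {b x : ℝ} (hx : x ∈ Icc (-1:ℝ) 1) {f g : ℝ → ℝ}
    (hf : IntervalIntegrable f volume (-1) 1) (hg : IntervalIntegrable g volume (-1) 1) :
    AD b f x - AD b g x = AD b (fun ξ => f ξ - g ξ) x := by
  obtain ⟨f1, f2⟩ := intervalIntegrable_Gxi_mul (b := b) hx hf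
  obtain ⟨g1, g2⟩ := intervalIntegrable_Gxi_mul (b := b) hx hg
  simp only [AD_eq_integral, mul_sub]
  rw [intervalIntegral.integral_sub (f1.trans f2) (g1.trans g2)]

lemma greenOp_deriv_eq_parts (A k : ℝ) {x : ℝ} (hx : x ∈ Icc (-1:ℝ) 1) {p p' : ℝ → ℝ}
    (hp : Continuous p) (hp' : ∀ ξ ∈ Ioo (-1:ℝ) 1, HasDerivAt p (p' ξ) ξ)
    (hi : IntervalIntegrable p' volume (-1) 1) :
    greenOp A k p' x = greenOpParts A k p x := by
  have hx' : x ∈ uIcc (-1:ℝ) 1 := by rwa [uIcc_of_le (by norm_num)]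
  have h1 := hi.mono_set (uIcc_subset_uIcc_left hx')
  have h2 := hi.mono_set (uIcc_subset_uIcc_right hx')
  have dc1 : ∀ ξ : ℝ, HasDerivAt (fun ξ => Real.cosh (k * (1 + ξ)))
      (k * Real.sinh (k * (1 + ξ))) ξ := fun ξ => by
    simpa [mul_comm] using (((hasDerivAt_id ξ).const_add 1).const_mul k).cosh
  have dc2 : ∀ ξ : ℝ, HasDerivAt (fun ξ => Real.cosh (k * (1 - ξ)))
      (-(k * Real.sinh (k * (1 - ξ)))) ξ := fun ξ => by
    simpa [mul_comm] using (((hasDerivAt_id ξ).const_sub 1).const_mul k).cosh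
  have e1 := intervalIntegral.integral_mul_deriv_eq_deriv_mul_of_hasDerivAt
    (a := -1) (b := x) (by fun_prop) hp.continuousOn (fun ξ _ => dc1 ξ)
    (fun ξ hξ => hp' ξ ⟨by rw [min_eq_left hx.1] at hξ; exact hξ.1,
      by rw [max_eq_right hx.1] at hξ; exact hξ.2.trans_le hx.2⟩)
    ((by fun_prop : Continuous fun ξ => k * Real.sinh (k * (1 + ξ))).intervalIntegrable _ _) h1
  have e2 := intervalIntegral.integral_mul_deriv_eq_deriv_mul_of_hasDerivAt
    (a := x) (b := 1) (by fun_prop) hp.continuousOn (fun ξ _ => dc2 ξ)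
    (fun ξ hξ => hp' ξ ⟨by rw [min_eq_left hx.2] at hξ; exact hx.1.trans_lt hξ.1,
      by rw [max_eq_right hx.2] at hξ; exact hξ.2⟩)
    ((by fun_prop : Continuous fun ξ => -(k * Real.sinh (k * (1 - ξ)))).intervalIntegrable _ _) h2
  simp only [neg_mul, mul_assoc, intervalIntegral.integral_const_mul,
    intervalIntegral.integral_neg] at e1 e2
  rw [greenOp, greenOpParts, e1, e2]
  norm_num

lemma hasDerivAt_greenOp (A k : ℝ) {f : ℝ → ℝ} (hf : Continuous f) (x : ℝ) :
    HasDerivAt (greenOp A k f) (greenOpDeriv A k f x) x := by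
  have c1 : Continuous fun ξ => Real.cosh (k * (1 + ξ)) * f ξ := by fun_prop
  have c2 : Continuous fun ξ => Real.cosh (k * (1 - ξ)) * f ξ := by fun_prop
  have i1 := (c1.integral_hasStrictDerivAt (-1) x).hasDerivAt
  have i2 := intervalIntegral.integral_hasDerivAt_left (c2.intervalIntegrable x 1)
    (c2.stronglyMeasurableAtFilter _ _) c2.continuousAt
  have s1 := (((hasDerivAt_id x).const_sub 1).const_mul k).sinh
  have s2 := (((hasDerivAt_id x).const_add 1).const_mul k).sinh
  have := ((s1.fun_mul i1).fun_sub (s2.fun_mul i2)).const_mul A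
  unfold greenOp
  refine this.congr_deriv ?_
  simp only [greenOpDeriv, id]
  ring

lemma intervalIntegral_swap {h : ℝ → ℝ → ℝ} (hh : Continuous fun p : ℝ × ℝ => h p.1 p.2)
    {a b c d : ℝ} (hab : a ≤ b) (hcd : c ≤ d) :
    ∫ τ in a..b, ∫ ξ in c..d, h τ ξ = ∫ ξ in c..d, ∫ τ in a..b, h τ ξ := by
  simp only [intervalIntegral.integral_of_le hab, intervalIntegral.integral_of_le hcd]
  refine integral_integral_swap ?_
  rw [Measure.prod_restrict]
  exact (hh.continuousOn.integrableOn_compact (isCompact_Icc.prod isCompact_Icc)).mono_set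
    (prod_mono Ioc_subset_Icc_self Ioc_subset_Icc_self)

lemma continuous_integral_snd {h : ℝ → ℝ → ℝ} (hh : Continuous fun p : ℝ × ℝ => h p.1 p.2) :
    Continuous fun p : ℝ × ℝ => ∫ τ in (0:ℝ)..p.1, h τ p.2 := by
  refine intervalIntegral.continuous_parametric_intervalIntegral_of_continuous
    (f := fun (p : ℝ × ℝ) τ => h τ p.2) ?_ continuous_fst
  exact hh.comp (by fun_prop : Continuous fun q : (ℝ × ℝ) × ℝ => (q.2, q.1.2))

lemma continuous_integral_mul_left {φ : ℝ → ℝ} (hφ : Continuous φ) {h : ℝ → ℝ → ℝ}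
    (hh : Continuous fun p : ℝ × ℝ => h p.1 p.2) (a : ℝ) :
    Continuous fun p : ℝ × ℝ => ∫ ξ in a..p.2, φ ξ * h p.1 ξ := by
  refine intervalIntegral.continuous_parametric_intervalIntegral_of_continuous
    (f := fun (p : ℝ × ℝ) ξ => φ ξ * h p.1 ξ) ?_ continuous_snd
  exact (hφ.comp continuous_snd).mul
    (hh.comp (by fun_prop : Continuous fun q : (ℝ × ℝ) × ℝ => (q.1.1, q.2)))

lemma continuous_integral_mul_right {φ : ℝ → ℝ} (hφ : Continuous φ) {h : ℝ → ℝ → ℝ}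
    (hh : Continuous fun p : ℝ × ℝ => h p.1 p.2) (a : ℝ) :
    Continuous fun p : ℝ × ℝ => ∫ ξ in p.2..a, φ ξ * h p.1 ξ := by
  refine (continuous_integral_mul_left hφ hh a).neg.congr fun p => ?_
  exact (intervalIntegral.integral_symm _ _).symm


lemma continuous_greenOp (A k : ℝ) {h : ℝ → ℝ → ℝ}
    (hh : Continuous fun p : ℝ × ℝ => h p.1 p.2) :
    Continuous fun p : ℝ × ℝ => greenOp A k (h p.1) p.2 := by
  have h1 := continuous_integral_mul_left
    (by fun_prop : Continuous fun ξ => Real.cosh (k * (1 + ξ))) hh (-1)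
  have h2 := continuous_integral_mul_right
    (by fun_prop : Continuous fun ξ => Real.cosh (k * (1 - ξ))) hh 1
  unfold greenOp
  fun_prop

lemma continuous_greenOpDeriv (A k : ℝ) {h : ℝ → ℝ → ℝ}
    (hh : Continuous fun p : ℝ × ℝ => h p.1 p.2) :
    Continuous fun p : ℝ × ℝ => greenOpDeriv A k (h p.1) p.2 := by
  have h1 := continuous_integral_mul_left
    (by fun_prop : Continuous fun ξ => Real.cosh (k * (1 + ξ))) hh (-1)
  have h2 := continuous_integral_mul_right
    (by fun_prop : Continuous fun ξ => Real.cosh (k * (1 - ξ))) hh 1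
  unfold greenOpDeriv
  fun_prop

lemma continuous_greenOpParts (A k : ℝ) {h : ℝ → ℝ → ℝ}
    (hh : Continuous fun p : ℝ × ℝ => h p.1 p.2) :
    Continuous fun p : ℝ × ℝ => greenOpParts A k (h p.1) p.2 := by
  have h1 := continuous_integral_mul_left
    (by fun_prop : Continuous fun ξ => Real.sinh (k * (1 + ξ))) hh (-1)
  have h2 := continuous_integral_mul_right
    (by fun_prop : Continuous fun ξ => Real.sinh (k * (1 - ξ))) hh 1
  have h3 : ∀ y : ℝ, Continuous fun p : ℝ × ℝ => h p.1 y := fun y =>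
    hh.comp (by fun_prop : Continuous fun p : ℝ × ℝ => (p.1, y))
  have h4 := h3 1
  have h5 := h3 (-1)
  unfold greenOpParts
  fun_prop

lemma integral_greenOp (A k : ℝ) {h : ℝ → ℝ → ℝ}
    (hh : Continuous fun p : ℝ × ℝ => h p.1 p.2) {t x : ℝ} (ht : 0 ≤ t)
    (hx : x ∈ Icc (-1:ℝ) 1) :
    ∫ τ in (0:ℝ)..t, greenOp A k (h τ) x =
      greenOp A k (fun ξ => ∫ τ in (0:ℝ)..t, h τ ξ) x := by
  have c1 : Continuous fun p : ℝ × ℝ => Real.cosh (k * (1 + p.2)) * h p.1 p.2 := by fun_prop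
  have c2 : Continuous fun p : ℝ × ℝ => Real.cosh (k * (1 - p.2)) * h p.1 p.2 := by fun_prop
  have i1 := (continuous_integral_mul_left
    (by fun_prop : Continuous fun ξ => Real.cosh (k * (1 + ξ))) hh (-1)).comp
      (Continuous.prodMk_left x)
  have i2 := (continuous_integral_mul_right
    (by fun_prop : Continuous fun ξ => Real.cosh (k * (1 - ξ))) hh 1).comp
      (Continuous.prodMk_left x)
  unfold greenOp
  rw [intervalIntegral.integral_const_mul, intervalIntegral.integral_sub,
    intervalIntegral.integral_const_mul, intervalIntegral.integral_const_mul,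
    intervalIntegral_swap c1 ht hx.1, intervalIntegral_swap c2 ht hx.2]
  · simp only [intervalIntegral.integral_const_mul]
  · exact (i1.const_mul _).intervalIntegrable _ _
  · exact (i2.const_mul _).intervalIntegrable _ _

lemma AD_const_mul_add {b x : ℝ} (hx : x ∈ Icc (-1:ℝ) 1) {f g : ℝ → ℝ} (c : ℝ)
    (hf : IntervalIntegrable f volume (-1) 1) (hg : IntervalIntegrable g volume (-1) 1) :
    AD b (fun ξ => c * f ξ + g ξ) x = c * AD b f x + AD b g x := by
  obtain ⟨f1, f2⟩ := intervalIntegrable_Gxi_mul (b := b) hx hf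
  obtain ⟨g1, g2⟩ := intervalIntegrable_Gxi_mul (b := b) hx hg
  simp only [AD_eq_integral, mul_add, mul_left_comm _ c]
  rw [intervalIntegral.integral_add ((f1.trans f2).const_mul c) (g1.trans g2),
    intervalIntegral.integral_const_mul]

lemma abs_mul_le_mul {a b p q : ℝ} (ha : |a| ≤ p) (hb : |b| ≤ q) : |a * b| ≤ p * q := by
  rw [abs_mul]
  exact mul_le_mul ha hb (abs_nonneg _) ((abs_nonneg _).trans ha)

lemma abs_integral_mul_le {φ f : ℝ → ℝ} {q B a b : ℝ} (ha : a ∈ Icc (-1:ℝ) 1)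
    (hb : b ∈ Icc (-1:ℝ) 1) (hφ : ∀ ξ ∈ Icc (-1:ℝ) 1, |φ ξ| ≤ q)
    (hf : ∀ ξ ∈ Icc (-1:ℝ) 1, |f ξ| ≤ B) : |∫ ξ in a..b, φ ξ * f ξ| ≤ q * B * 2 := by
  have hq : 0 ≤ q := (abs_nonneg _).trans (hφ a ha)
  have hB : 0 ≤ B := (abs_nonneg _).trans (hf a ha)
  refine (intervalIntegral.norm_integral_le_of_norm_le_const (C := q * B)
    (f := fun ξ => φ ξ * f ξ) fun ξ hξ => ?_).trans ?_
  · have hξ' : ξ ∈ Icc (-1:ℝ) 1 := uIcc_subset_Icc ha hb (uIoc_subset_uIcc hξ)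
    exact abs_mul_le_mul (hφ ξ hξ') (hf ξ hξ')
  · gcongr
    rw [abs_le]
    constructor <;> linarith [ha.1, ha.2, hb.1, hb.2]

lemma abs_cosh_le_cosh (k : ℝ) {y : ℝ} (hy : |y| ≤ 2) : |Real.cosh (k * y)| ≤ Real.cosh (2 * k) := by
  rw [abs_of_pos (Real.cosh_pos _), Real.cosh_le_cosh, abs_mul, abs_mul, abs_two, mul_comm]
  gcongr

lemma abs_sinh_le_cosh (k : ℝ) {y : ℝ} (hy : |y| ≤ 2) : |Real.sinh (k * y)| ≤ Real.cosh (2 * k) := by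
  refine le_trans ?_ (abs_cosh_le_cosh k hy)
  rw [Real.abs_sinh, abs_of_pos (Real.cosh_pos _), ← Real.cosh_abs]
  exact (Real.sinh_lt_cosh _).le

lemma abs_one_add_le {x : ℝ} (hx : x ∈ Icc (-1:ℝ) 1) : |1 + x| ≤ 2 := by
  rw [abs_le]; constructor <;> linarith [hx.1, hx.2]

lemma abs_one_sub_le {x : ℝ} (hx : x ∈ Icc (-1:ℝ) 1) : |1 - x| ≤ 2 := by
  rw [abs_le]; constructor <;> linarith [hx.1, hx.2]

lemma exists_greenOp_bound (A k : ℝ) : ∃ C, 0 ≤ C ∧ ∀ (f : ℝ → ℝ) (B : ℝ),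
    (∀ x ∈ Icc (-1:ℝ) 1, |f x| ≤ B) → ∀ x ∈ Icc (-1:ℝ) 1, |greenOp A k f x| ≤ C * B := by
  set q := Real.cosh (2 * k) with hq
  refine ⟨|A| * (q * q * 2 + q * q * 2), by positivity, fun f B hf x hx => ?_⟩
  have i1 := abs_integral_mul_le (a := -1) (b := x) (by norm_num) hx
    (fun ξ hξ => abs_cosh_le_cosh k (abs_one_add_le hξ)) hf
  have i2 := abs_integral_mul_le (a := x) (b := 1) hx (by norm_num)
    (fun ξ hξ => abs_cosh_le_cosh k (abs_one_sub_le hξ)) hf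
  refine (abs_mul_le_mul le_rfl ((abs_sub _ _).trans (add_le_add
    (abs_mul_le_mul (abs_sinh_le_cosh k (abs_one_sub_le hx)) i1)
    (abs_mul_le_mul (abs_sinh_le_cosh k (abs_one_add_le hx)) i2)))).trans_eq ?_
  ring

lemma exists_greenOpDeriv_bound (A k : ℝ) : ∃ C, 0 ≤ C ∧ ∀ (f : ℝ → ℝ) (B : ℝ),
    (∀ x ∈ Icc (-1:ℝ) 1, |f x| ≤ B) → ∀ x ∈ Icc (-1:ℝ) 1, |greenOpDeriv A k f x| ≤ C * B := by
  set q := Real.cosh (2 * k) with hq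
  refine ⟨|A| * (|k| * q * (q * 2) + |k| * q * (q * 2) + (q * q + q * q)), by positivity,
    fun f B hf x hx => ?_⟩
  have i1 := abs_integral_mul_le (a := -1) (b := x) (by norm_num) hx
    (fun ξ hξ => abs_cosh_le_cosh k (abs_one_add_le hξ)) hf
  have i2 := abs_integral_mul_le (a := x) (b := 1) hx (by norm_num)
    (fun ξ hξ => abs_cosh_le_cosh k (abs_one_sub_le hξ)) hf
  have s1 := abs_sinh_le_cosh k (abs_one_sub_le hx)
  have s2 := abs_sinh_le_cosh k (abs_one_add_le hx)
  have c1 := abs_cosh_le_cosh k (abs_one_sub_le hx)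
  have c2 := abs_cosh_le_cosh k (abs_one_add_le hx)
  refine (abs_mul_le_mul le_rfl ((abs_add_le _ _).trans (add_le_add
    ((abs_sub _ _).trans (add_le_add
      (abs_mul_le_mul ((abs_neg _).trans_le (abs_mul_le_mul le_rfl c1)) i1)
      (abs_mul_le_mul (abs_mul_le_mul le_rfl c2) i2)))
    (abs_mul_le_mul ((abs_add_le _ _).trans
      (add_le_add (abs_mul_le_mul s1 c2) (abs_mul_le_mul s2 c1))) (hf x hx))))).trans_eq ?_
  ring

lemma exists_greenOpParts_bound (A k : ℝ) : ∃ C, 0 ≤ C ∧ ∀ (f : ℝ → ℝ) (B : ℝ),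
    (∀ x ∈ Icc (-1:ℝ) 1, |f x| ≤ B) → ∀ x ∈ Icc (-1:ℝ) 1, |greenOpParts A k f x| ≤ C * B := by
  set q := Real.cosh (2 * k) with hq
  refine ⟨|A| * (q * (q + 1 + |k| * (q * 2)) + q * (1 + q + |k| * (q * 2))), by positivity,
    fun f B hf x hx => ?_⟩
  have i1 := abs_integral_mul_le (a := -1) (b := x) (by norm_num) hx
    (fun ξ hξ => abs_sinh_le_cosh k (abs_one_add_le hξ)) hf
  have i2 := abs_integral_mul_le (a := x) (b := 1) hx (by norm_num)
    (fun ξ hξ => abs_sinh_le_cosh k (abs_one_sub_le hξ)) hf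
  have s1 := abs_sinh_le_cosh k (abs_one_sub_le hx)
  have s2 := abs_sinh_le_cosh k (abs_one_add_le hx)
  have c1 := abs_cosh_le_cosh k (abs_one_sub_le hx)
  have c2 := abs_cosh_le_cosh k (abs_one_add_le hx)
  refine (abs_mul_le_mul le_rfl ((abs_sub _ _).trans (add_le_add
    (abs_mul_le_mul s1 ((abs_sub _ _).trans (add_le_add
      ((abs_sub _ _).trans (add_le_add (abs_mul_le_mul c2 (hf x hx)) (hf (-1) (by norm_num))))
      (abs_mul_le_mul le_rfl i1))))
    (abs_mul_le_mul s2 ((abs_add_le _ _).trans (add_le_add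
      ((abs_sub _ _).trans (add_le_add (hf 1 (by norm_num)) (abs_mul_le_mul c1 (hf x hx))))
      (abs_mul_le_mul le_rfl i2))))))).trans_eq ?_
  ring

lemma abs_integral_le_exp {F : ℝ → ℝ} {K l t : ℝ} (ht : 0 ≤ t) (hl : 0 < l) (hK : 0 ≤ K)
    (hF : ∀ τ ∈ Icc 0 t, |F τ| ≤ K * Real.exp (l * τ)) :
    |∫ τ in (0:ℝ)..t, F τ| ≤ K / l * Real.exp (l * t) := by
  have hc : Continuous fun τ => K * Real.exp (l * τ) := by fun_prop
  have hd : ∀ τ ∈ uIcc 0 t,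
      HasDerivAt (fun τ => K / l * Real.exp (l * τ)) (K * Real.exp (l * τ)) τ := fun τ _ => by
    refine ((((hasDerivAt_id τ).const_mul l).exp).const_mul (K / l)).congr_deriv ?_
    simp only [id]
    field_simp
  have h := intervalIntegral.norm_integral_le_of_norm_le ht (f := F) (μ := volume)
    (Filter.Eventually.of_forall fun τ hτ => hF τ (Ioc_subset_Icc_self hτ))
    (hc.intervalIntegrable _ _)
  rw [intervalIntegral.integral_eq_sub_of_hasDerivAt hd (hc.intervalIntegrable _ _)] at h
  refine h.trans (sub_le_self _ (by positivity))

/-- If both integrands fail to be integrable, both integrals are `0`. -/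
lemma abs_integral_sub_le_exp {F₁ F₂ F : ℝ → ℝ} {K l t : ℝ} (ht : 0 ≤ t) (hl : 0 < l)
    (hK : 0 ≤ K) (hc : Continuous F) (h : ∀ τ ∈ Icc 0 t, F₁ τ - F₂ τ = F τ)
    (hF : ∀ τ ∈ Icc 0 t, |F τ| ≤ K * Real.exp (l * τ)) :
    |(∫ τ in (0:ℝ)..t, F₁ τ) - ∫ τ in (0:ℝ)..t, F₂ τ| ≤ K / l * Real.exp (l * t) := by
  have hi := hc.intervalIntegrable (μ := volume) 0 t
  have hsub : ∀ τ ∈ uIoc 0 t, τ ∈ Icc 0 t := fun τ hτ => by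
    rw [uIoc_of_le ht] at hτ
    exact Ioc_subset_Icc_self hτ
  by_cases h1 : IntervalIntegrable F₁ volume 0 t
  · have h2 : IntervalIntegrable F₂ volume 0 t := (h1.sub hi).congr fun τ hτ => by
      simp [← h τ (hsub τ hτ)]
    rw [← intervalIntegral.integral_sub h1 h2]
    exact abs_integral_le_exp ht hl hK fun τ hτ => (h τ hτ).symm ▸ hF τ hτ
  · have h2 : ¬ IntervalIntegrable F₂ volume 0 t := fun h2 =>
      h1 ((h2.add hi).congr fun τ hτ => by simp [← h τ (hsub τ hτ)])
    rw [intervalIntegral.integral_undef h1, intervalIntegral.integral_undef h2, sub_zero, abs_zero]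
    positivity

lemma eqOn_zero_of_exp_contraction {w : ℝ × ℝ → ℝ} (hw : Continuous w) (l : ℝ)
    {S : Set (ℝ × ℝ)} (hS : IsCompact S)
    (hstep : ∀ N, 0 ≤ N → (∀ p ∈ S, |w p| ≤ N * Real.exp (l * p.1)) →
      ∀ p ∈ S, |w p| ≤ N / 2 * Real.exp (l * p.1)) :
    ∀ p ∈ S, w p = 0 := by
  intro p hp
  obtain ⟨p₀, hp₀, hmax⟩ := hS.exists_isMaxOn ⟨p, hp⟩
    (f := fun p => |w p| * Real.exp (-(l * p.1))) (by fun_prop)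
  set N := |w p₀| * Real.exp (-(l * p₀.1)) with hN
  have key : ∀ (p : ℝ × ℝ) (M : ℝ), |w p| ≤ M * Real.exp (l * p.1) ↔
      |w p| * Real.exp (-(l * p.1)) ≤ M := fun p M => by
    rw [Real.exp_neg, ← div_eq_mul_inv, div_le_iff₀ (Real.exp_pos _)]
  have hN0 : 0 ≤ N := by positivity
  have hall : ∀ p ∈ S, |w p| ≤ N * Real.exp (l * p.1) := fun p hp => (key p N).2 (hmax hp)
  have h2 := (key p₀ _).1 (hstep N hN0 hall p₀ hp₀)
  have : N = 0 := by linarith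
  have h3 := hall p hp
  rw [this, zero_mul] at h3
  exact abs_eq_zero.1 (le_antisymm h3 (abs_nonneg _))

lemma jw_pos (μ : ℝ) {x : ℝ} (hx : x ∈ Ioo (-1:ℝ) 1) : 0 < jw μ x :=
  Real.rpow_pos_of_pos (by nlinarith [hx.1, hx.2]) _

lemma inv_jw_le (μ : ℝ) {x : ℝ} (hx : x ∈ Ioo (-1:ℝ) 1) :
    (jw μ x)⁻¹ ≤ 1 + (1 - x) ^ (-μ) + (1 + x) ^ (-μ) := by
  have h0 : 0 < 1 - x ^ 2 := by nlinarith [hx.1, hx.2]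
  have hm : 0 < 1 - x := by linarith [hx.2]
  have hp : 0 < 1 + x := by linarith [hx.1]
  have p1 := Real.rpow_nonneg hm.le (-μ)
  have p2 := Real.rpow_nonneg hp.le (-μ)
  rw [jw, ← Real.rpow_neg h0.le]
  rcases le_total μ 0 with hμ | hμ
  · have : (1 - x ^ 2) ^ (-μ) ≤ 1 :=
      Real.rpow_le_one h0.le (by nlinarith [sq_nonneg x]) (by linarith)
    linarith
  · rcases le_total 0 x with h | h
    · have : (1 - x ^ 2) ^ (-μ) ≤ (1 - x) ^ (-μ) :=
        Real.rpow_le_rpow_of_nonpos hm (by nlinarith) (by linarith)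
      linarith
    · have : (1 - x ^ 2) ^ (-μ) ≤ (1 + x) ^ (-μ) :=
        Real.rpow_le_rpow_of_nonpos hp (by nlinarith) (by linarith)
      linarith

lemma MemH2w.intervalIntegrable_deriv_deriv {μ : ℝ} (hμ : μ < 1) {f : ℝ → ℝ}
    (hf : MemH2w μ f) : IntervalIntegrable (deriv (deriv f)) volume (-1) 1 := by
  have r : IntervalIntegrable (fun x : ℝ => x ^ (-μ)) volume 0 2 :=
    intervalIntegral.intervalIntegrable_rpow' (by linarith)
  have r1 : IntervalIntegrable (fun x : ℝ => (1 - x) ^ (-μ)) volume (-1) 1 := by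
    have := (r.comp_sub_left 1).symm
    norm_num at this
    exact this
  have r2 : IntervalIntegrable (fun x : ℝ => (1 + x) ^ (-μ)) volume (-1) 1 := by
    have := r.comp_add_left 1
    norm_num at this
    exact this
  have hd := ((intervalIntegrable_const (c := (1:ℝ))).add r1).add r2
  rw [intervalIntegrable_iff_integrableOn_Ioo_of_le (by norm_num)] at hd ⊢
  refine Integrable.mono' (hf.2.2.add hd) (measurable_deriv _).aestronglyMeasurable ?_
  refine (ae_restrict_iff' measurableSet_Ioo).2 (Filter.Eventually.of_forall fun x hx => ?_)
  have hw := jw_pos μ hx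
  have h1 := inv_jw_le μ hx
  simp only [Pi.add_apply, Real.norm_eq_abs]
  refine le_trans ?_ (add_le_add le_rfl h1)
  set a := deriv (deriv f) x
  set w := jw μ x
  have e : a ^ 2 * w + w⁻¹ - 2 * |a| = (|a| * w - 1) ^ 2 * w⁻¹ := by
    rw [← sq_abs a]
    field_simp
    ring
  have e2 : 0 ≤ (|a| * w - 1) ^ 2 * w⁻¹ := by positivity
  have e3 : 0 ≤ (f x ^ 2 + deriv f x ^ 2) * w := by positivity
  nlinarith [abs_nonneg a]

/-- The difference of the fluxes `u + η u` of two pairs. -/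
def fluxDiff (η₁ u₁ η₂ u₂ : ℝ → ℝ → ℝ) (t x : ℝ) : ℝ :=
  (u₁ t x + η₁ t x * u₁ t x) - (u₂ t x + η₂ t x * u₂ t x)

namespace IsSolBS

variable {T b c μ : ℝ} {H U η₁ u₁ η₂ u₂ : ℝ → ℝ → ℝ}

lemma continuous_fluxDiff (h1 : IsSolBS T b c μ H U η₁ u₁) (h2 : IsSolBS T b c μ H U η₂ u₂) :
    Continuous fun p : ℝ × ℝ => fluxDiff η₁ u₁ η₂ u₂ p.1 p.2 := by
  obtain ⟨ce1, cu1, -⟩ := h1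
  obtain ⟨ce2, cu2, -⟩ := h2
  unfold fluxDiff
  fun_prop

lemma sub_eq_greenOp (h1 : IsSolBS T b c μ H U η₁ u₁) (h2 : IsSolBS T b c μ H U η₂ u₂)
    {t x : ℝ} (ht : t ∈ Icc 0 T) (hx : x ∈ Icc (-1:ℝ) 1) :
    η₁ t x - η₂ t x = greenOp (greenConst b) (√b)⁻¹
      (fun ξ => ∫ τ in (0:ℝ)..t, fluxDiff η₁ u₁ η₂ u₂ τ ξ) x := by
  have hflux : ∀ η u : ℝ → ℝ → ℝ, Continuous (fun p : ℝ × ℝ => η p.1 p.2) →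
      Continuous (fun p : ℝ × ℝ => u p.1 p.2) →
      (∀ τ, IntervalIntegrable (fun y => u τ y + η τ y * u τ y) volume (-1) 1) ∧
      IntervalIntegrable (fun τ => AD b (fun y => u τ y + η τ y * u τ y) x) volume 0 t := by
    intro η u ce cu
    have cf : Continuous fun p : ℝ × ℝ => u p.1 p.2 + η p.1 p.2 * u p.1 p.2 := by fun_prop
    have hi : ∀ τ, IntervalIntegrable (fun y => u τ y + η τ y * u τ y) volume (-1) 1 :=
      fun τ => (cf.comp (Continuous.prodMk_right τ)).intervalIntegrable _ _
    refine ⟨hi, ?_⟩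
    simp only [fun τ => AD_eq_greenOp (b := b) hx (hi τ)]
    exact ((continuous_greenOp (greenConst b) (√b)⁻¹
      (h := fun t y => u t y + η t y * u t y) cf).comp
      (Continuous.prodMk_left x)).intervalIntegrable _ _
  obtain ⟨a1, b1⟩ := hflux η₁ u₁ h1.1 h1.2.1
  obtain ⟨a2, b2⟩ := hflux η₂ u₂ h2.1 h2.2.1
  rw [(h1.2.2.2 t ht x).1, (h2.2.2.2 t ht x).1, add_sub_add_left_eq_sub,
    ← intervalIntegral.integral_sub b1 b2,
    ← integral_greenOp _ _ (h1.continuous_fluxDiff h2) ht.1 hx]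
  refine intervalIntegral.integral_congr fun τ _ => ?_
  simp only [AD_sub hx (a1 τ) (a2 τ), AD_eq_greenOp hx ((a1 τ).sub (a2 τ))]
  rfl

lemma continuous_integral_fluxDiff (h1 : IsSolBS T b c μ H U η₁ u₁)
    (h2 : IsSolBS T b c μ H U η₂ u₂) :
    Continuous fun p : ℝ × ℝ => ∫ τ in (0:ℝ)..p.1, fluxDiff η₁ u₁ η₂ u₂ τ p.2 :=
  continuous_integral_snd (h1.continuous_fluxDiff h2)

lemma deriv_sub_eq_greenOpDeriv (h1 : IsSolBS T b c μ H U η₁ u₁)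
    (h2 : IsSolBS T b c μ H U η₂ u₂) {t x : ℝ} (ht : t ∈ Icc 0 T) (hx : x ∈ Ioo (-1:ℝ) 1) :
    deriv (η₁ t) x - deriv (η₂ t) x = greenOpDeriv (greenConst b) (√b)⁻¹
      (fun ξ => ∫ τ in (0:ℝ)..t, fluxDiff η₁ u₁ η₂ u₂ τ ξ) x := by
  have hn : Ioo (-1:ℝ) 1 ∈ nhds x := isOpen_Ioo.mem_nhds hx
  have d1 := ((h1.2.2.1 t ht).1.1.differentiableAt hn).hasDerivAt
  have d2 := ((h2.2.2.1 t ht).1.1.differentiableAt hn).hasDerivAt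
  have d3 := hasDerivAt_greenOp (greenConst b) (√b)⁻¹
    ((h1.continuous_integral_fluxDiff h2).comp (Continuous.prodMk_right t)) x
  refine (d1.sub d2).unique (d3.congr_of_eventuallyEq ?_)
  filter_upwards [hn] with y hy
  exact h1.sub_eq_greenOp h2 ht (Ioo_subset_Icc_self hy)

lemma AD_deriv_deriv_sub (h1 : IsSolBS T b c μ H U η₁ u₁) (h2 : IsSolBS T b c μ H U η₂ u₂)
    (hμ : μ < 1) {t x : ℝ} (ht : t ∈ Icc 0 T) (hx : x ∈ Icc (-1:ℝ) 1) :
    AD b (fun ξ => deriv (deriv (η₁ t)) ξ - deriv (deriv (η₂ t)) ξ) x =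
      greenOpParts (greenConst b) (√b)⁻¹ (greenOpDeriv (greenConst b) (√b)⁻¹
        (fun ξ => ∫ τ in (0:ℝ)..t, fluxDiff η₁ u₁ η₂ u₂ τ ξ)) x := by
  have hi := ((h1.2.2.1 t ht).1.intervalIntegrable_deriv_deriv hμ).sub
    ((h2.2.2.1 t ht).1.intervalIntegrable_deriv_deriv hμ)
  rw [AD_eq_greenOp hx hi]
  have hc := (continuous_greenOpDeriv (greenConst b) (√b)⁻¹
    (h := fun t ξ => ∫ τ in (0:ℝ)..t, fluxDiff η₁ u₁ η₂ u₂ τ ξ)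
    (h1.continuous_integral_fluxDiff h2)).comp (Continuous.prodMk_right t)
  refine greenOp_deriv_eq_parts _ _ hx hc (fun ξ hξ => ?_) hi
  have hn : Ioo (-1:ℝ) 1 ∈ nhds ξ := isOpen_Ioo.mem_nhds hξ
  have d1 := ((h1.2.2.1 t ht).1.2.1.differentiableAt hn).hasDerivAt
  have d2 := ((h2.2.2.1 t ht).1.2.1.differentiableAt hn).hasDerivAt
  refine (d1.sub d2).congr_of_eventuallyEq ?_
  filter_upwards [hn] with y hy
  exact (h1.deriv_sub_eq_greenOpDeriv h2 ht hy).symm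

/-- The difference of the right-hand sides of the equation for `u`, with the second derivative
integrated by parts. -/
lemma AD_sub_eq (h1 : IsSolBS T b c μ H U η₁ u₁) (h2 : IsSolBS T b c μ H U η₂ u₂)
    (hμ : μ < 1) {t x : ℝ} (ht : t ∈ Icc 0 T) (hx : x ∈ Icc (-1:ℝ) 1) :
    AD b (fun y => c * deriv (deriv (η₁ t)) y + η₁ t y + (u₁ t y) ^ 2 / 2) x -
      AD b (fun y => c * deriv (deriv (η₂ t)) y + η₂ t y + (u₂ t y) ^ 2 / 2) x =
    c * greenOpParts (greenConst b) (√b)⁻¹ (greenOpDeriv (greenConst b) (√b)⁻¹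
        (fun ξ => ∫ τ in (0:ℝ)..t, fluxDiff η₁ u₁ η₂ u₂ τ ξ)) x +
      greenOp (greenConst b) (√b)⁻¹
        (fun y => (η₁ t y - η₂ t y) + (u₁ t y + u₂ t y) * (u₁ t y - u₂ t y) / 2) x := by
  obtain ⟨ce1, cu1, hm1, -⟩ := id h1
  obtain ⟨ce2, cu2, hm2, -⟩ := id h2
  have hi1 := (hm1 t ht).1.intervalIntegrable_deriv_deriv hμ
  have hi2 := (hm2 t ht).1.intervalIntegrable_deriv_deriv hμ
  have sl : ∀ f : ℝ → ℝ → ℝ, Continuous (fun p : ℝ × ℝ => f p.1 p.2) → Continuous (f t) :=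
    fun f hf => hf.comp (Continuous.prodMk_right t)
  have se1 := sl η₁ ce1
  have se2 := sl η₂ ce2
  have su1 := sl u₁ cu1
  have su2 := sl u₂ cu2
  have k1 : IntervalIntegrable (fun y => η₁ t y + (u₁ t y) ^ 2 / 2) volume (-1) 1 :=
    (by fun_prop : Continuous fun y => η₁ t y + (u₁ t y) ^ 2 / 2).intervalIntegrable _ _
  have k2 : IntervalIntegrable (fun y => η₂ t y + (u₂ t y) ^ 2 / 2) volume (-1) 1 :=
    (by fun_prop : Continuous fun y => η₂ t y + (u₂ t y) ^ 2 / 2).intervalIntegrable _ _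
  simp only [add_assoc]
  rw [AD_const_mul_add hx c hi1 k1, AD_const_mul_add hx c hi2 k2, add_sub_add_comm, ← mul_sub,
    AD_sub hx hi1 hi2, AD_sub hx k1 k2, h1.AD_deriv_deriv_sub h2 hμ ht hx,
    AD_eq_greenOp hx (k1.sub k2)]
  congr 2
  funext y
  ring

end IsSolBS

/-- uniqueness for the integral formulation when `c < 0`:
two solutions in `C([0,T];H²_w) × C([0,T];H¹_w)` with the same data `H,U` coincide. -/
theorem uniqueness_integral_system_c_neg (T b c μ : ℝ) (hT : 0 < T) (hb : 0 < b)
    (hc : c < 0) (hμ₁ : -1 < μ) (hμ₂ : μ < 1) (H U : ℝ → ℝ → ℝ)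
    (η₁ u₁ η₂ u₂ : ℝ → ℝ → ℝ)
    (h1 : IsSolBS T b c μ H U η₁ u₁) (h2 : IsSolBS T b c μ H U η₂ u₂) :
    ∀ t ∈ Icc (0:ℝ) T, ∀ x ∈ Icc (-1:ℝ) 1, η₁ t x = η₂ t x ∧ u₁ t x = u₂ t x := by
  obtain ⟨ce1, cu1, -, -⟩ := id h1
  obtain ⟨ce2, cu2, -, -⟩ := id h2
  set A := greenConst b
  set k := (√b)⁻¹
  obtain ⟨C₁, hC₁, bd₁⟩ := exists_greenOp_bound A k
  obtain ⟨C₂, hC₂, bd₂⟩ := exists_greenOpDeriv_bound A k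
  obtain ⟨C₃, hC₃, bd₃⟩ := exists_greenOpParts_bound A k
  set S : Set (ℝ × ℝ) := Icc 0 T ×ˢ Icc (-1) 1
  have hS : IsCompact S := isCompact_Icc.prod isCompact_Icc
  obtain ⟨M, hM⟩ : ∃ M, ∀ p ∈ S, ‖|η₁ p.1 p.2| + |u₁ p.1 p.2| + |u₂ p.1 p.2|‖ ≤ M :=
    hS.exists_bound_of_continuousOn (by fun_prop)
  have hM' : ∀ t ∈ Icc 0 T, ∀ x ∈ Icc (-1:ℝ) 1, |η₁ t x| ≤ M ∧ |u₁ t x| ≤ M ∧ |u₂ t x| ≤ M := by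
    intro t ht x hx
    have := (le_abs_self _).trans (hM (t, x) ⟨ht, hx⟩)
    have a1 := abs_nonneg (η₁ t x)
    have a2 := abs_nonneg (u₁ t x)
    have a3 := abs_nonneg (u₂ t x)
    refine ⟨?_, ?_, ?_⟩ <;> linarith
  have hM0 : 0 ≤ M := (abs_nonneg _).trans
    (hM' 0 ⟨le_rfl, hT.le⟩ 0 ⟨by norm_num, by norm_num⟩).1
  set K₁ := 1 + M + M with hK₁
  set K₂ := |c| * (C₃ * (C₂ * K₁)) + C₁ * (1 + M) with hK₂
  have hK₁0 : 0 ≤ K₁ := by positivity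
  have hK₂0 : 0 ≤ K₂ := by positivity
  set l := 1 + 2 * (C₁ * K₁) + 2 * K₂ with hl
  have hl1 : 1 ≤ l := by linarith [mul_nonneg hC₁ hK₁0]
  have hl0 : 0 < l := by linarith
  set w : ℝ × ℝ → ℝ := fun p => max |η₁ p.1 p.2 - η₂ p.1 p.2| |u₁ p.1 p.2 - u₂ p.1 p.2| with hw
  have hwc : Continuous w := by fun_prop
  have hflux := h1.continuous_fluxDiff h2
  have hΓ := h1.continuous_integral_fluxDiff h2
  have hstep : ∀ N, 0 ≤ N → (∀ p ∈ S, |w p| ≤ N * Real.exp (l * p.1)) →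
      ∀ p ∈ S, |w p| ≤ N / 2 * Real.exp (l * p.1) := by
    intro N hN hb
    have hθ : ∀ t ∈ Icc 0 T, ∀ x ∈ Icc (-1:ℝ) 1, |η₁ t x - η₂ t x| ≤ N * Real.exp (l * t) :=
      fun t ht x hx => (le_max_left _ _).trans ((le_abs_self _).trans (hb (t, x) ⟨ht, hx⟩))
    have hv : ∀ t ∈ Icc 0 T, ∀ x ∈ Icc (-1:ℝ) 1, |u₁ t x - u₂ t x| ≤ N * Real.exp (l * t) :=
      fun t ht x hx => (le_max_right _ _).trans ((le_abs_self _).trans (hb (t, x) ⟨ht, hx⟩))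
    have hg : ∀ t ∈ Icc 0 T, ∀ x ∈ Icc (-1:ℝ) 1,
        |fluxDiff η₁ u₁ η₂ u₂ t x| ≤ K₁ * N * Real.exp (l * t) := by
      intro t ht x hx
      obtain ⟨m1, m2, m3⟩ := hM' t ht x hx
      have e : fluxDiff η₁ u₁ η₂ u₂ t x =
          (1 + η₁ t x) * (u₁ t x - u₂ t x) + u₂ t x * (η₁ t x - η₂ t x) := by
        rw [fluxDiff]; ring
      have m4 : |1 + η₁ t x| ≤ 1 + M := (abs_add_le _ _).trans (by simpa using m1)
      rw [e]
      refine ((abs_add_le _ _).trans (add_le_add (abs_mul_le_mul m4 (hv t ht x hx))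
        (abs_mul_le_mul m3 (hθ t ht x hx)))).trans_eq ?_
      rw [hK₁]; ring
    have hG : ∀ t ∈ Icc 0 T, ∀ x ∈ Icc (-1:ℝ) 1,
        |∫ τ in (0:ℝ)..t, fluxDiff η₁ u₁ η₂ u₂ τ x| ≤ K₁ * N / l * Real.exp (l * t) :=
      fun t ht x hx => abs_integral_le_exp ht.1 hl0 (by positivity)
        fun τ hτ => hg τ ⟨hτ.1, hτ.2.trans ht.2⟩ x hx
    have hP : ∀ t ∈ Icc 0 T, ∀ x ∈ Icc (-1:ℝ) 1,
        |greenOpDeriv A k (fun ξ => ∫ τ in (0:ℝ)..t, fluxDiff η₁ u₁ η₂ u₂ τ ξ) x| ≤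
          C₂ * (K₁ * N * Real.exp (l * t)) :=
      fun t ht x hx => bd₂ _ _ (fun ξ hξ => (hG t ht ξ hξ).trans
        (mul_le_mul_of_nonneg_right (div_le_self (by positivity) hl1) (Real.exp_pos _).le)) x hx
    have hR : ∀ t ∈ Icc 0 T, ∀ x ∈ Icc (-1:ℝ) 1,
        |(η₁ t x - η₂ t x) + (u₁ t x + u₂ t x) * (u₁ t x - u₂ t x) / 2| ≤
          (1 + M) * N * Real.exp (l * t) := by
      intro t ht x hx
      obtain ⟨m1, m2, m3⟩ := hM' t ht x hx
      rw [mul_div_right_comm]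
      have m4 : |(u₁ t x + u₂ t x) / 2| ≤ M := by
        rw [abs_div, abs_two]
        linarith [abs_add_le (u₁ t x) (u₂ t x)]
      refine ((abs_add_le _ _).trans (add_le_add (hθ t ht x hx)
        (abs_mul_le_mul m4 (hv t ht x hx)))).trans_eq ?_
      ring
    rintro ⟨t, x⟩ ⟨ht, hx⟩
    replace ht : t ∈ Icc 0 T := ht
    replace hx : x ∈ Icc (-1:ℝ) 1 := hx
    have hhalf : ∀ K, 2 * K ≤ l → K * N / l ≤ N / 2 := fun K hK => by
      rw [div_le_div_iff₀ hl0 two_pos]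
      nlinarith
    rw [abs_of_nonneg (le_max_of_le_left (abs_nonneg _))]
    refine max_le ?_ ?_
    · simp only
      rw [h1.sub_eq_greenOp h2 ht hx]
      refine (bd₁ _ _ (hG t ht) x hx).trans ?_
      rw [← mul_assoc, ← mul_div_assoc, ← mul_assoc]
      exact mul_le_mul_of_nonneg_right (hhalf _ (by linarith)) (Real.exp_pos _).le
    · have hcP := continuous_greenOpParts A k (h := fun t => greenOpDeriv A k
        (fun ξ => ∫ τ in (0:ℝ)..t, fluxDiff η₁ u₁ η₂ u₂ τ ξ)) (continuous_greenOpDeriv A k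
        (h := fun t ξ => ∫ τ in (0:ℝ)..t, fluxDiff η₁ u₁ η₂ u₂ τ ξ) hΓ)
      have hcG := continuous_greenOp A k (h := fun t y =>
        (η₁ t y - η₂ t y) + (u₁ t y + u₂ t y) * (u₁ t y - u₂ t y) / 2) (by fun_prop)
      simp only
      rw [(h1.2.2.2 t ht x).2, (h2.2.2.2 t ht x).2, add_sub_add_left_eq_sub]
      refine (abs_integral_sub_le_exp (K := K₂ * N) ht.1 hl0 (by positivity)
        (((hcP.const_mul c).add hcG).comp (Continuous.prodMk_left x))
        (fun τ hτ => h1.AD_sub_eq h2 hμ₂ ⟨hτ.1, hτ.2.trans ht.2⟩ hx) fun τ hτ => ?_).trans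
        (mul_le_mul_of_nonneg_right (hhalf _ (by linarith [mul_nonneg hC₁ hK₁0]))
          (Real.exp_pos _).le)
      have hτ' : τ ∈ Icc 0 T := ⟨hτ.1, hτ.2.trans ht.2⟩
      refine ((abs_add_le _ _).trans (add_le_add
        (abs_mul_le_mul le_rfl (bd₃ _ _ (hP τ hτ') x hx)) (bd₁ _ _ (hR τ hτ') x hx))).trans_eq ?_
      rw [hK₂]
      ring
  intro t ht x hx
  have h0 : w (t, x) = 0 := eqOn_zero_of_exp_contraction hwc l hS hstep (t, x) ⟨ht, hx⟩
  have hle := max_le_iff.1 h0.le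
  exact ⟨sub_eq_zero.1 (abs_nonpos_iff.1 hle.1), sub_eq_zero.1 (abs_nonpos_iff.1 hle.2)⟩
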